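/- (Self-adaptive SimPO is balanced.) Let β, γ ∈ ℝ with β > 0, let n_w, n_l > 0 (the response lengths |y_w|, |y_l|), and let P_w, P_l > 0 be real numbers. Set the stop-gradient coefficient β_w = β·(n_w·P_w)/(n_l·P_l), treated as a constant. Let d_w be the derivative at P_w of P ↦ −log σ((β_w/n_w)·log P − (β/n_l)·log P_l − γ), and let d_l be the derivative at P_l of P ↦ −log σ((β_w/n_w)·log P_w − (β/n_l)·log P − γ). Then |d_w| = |d_l|. -/

import Mathlib

/-- The logistic sigmoid σ(t) = 1/(1 + exp(−t)). -/
noncomputable def sigmoid (t : ℝ) : ℝ := 1 / (1 + Real.exp (-t))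

/-!
Both losses have the form `P ↦ -log σ(m(P))`, and `-log σ` has derivative `σ - 1`. By the chain rule, with `t`
the common value of the margin at `(Pw, Pl)`, the derivatives are
`(σ(t) - 1) · βw / (nw Pw)` and `-(σ(t) - 1) · β / (nl Pl)`. The choice of `βw` is exactly the one
that makes `βw / (nw Pw) = β / (nl Pl)`, so the two derivatives are opposite.
-/

theorem hasDerivAt_neg_log_sigmoid (t : ℝ) :
    HasDerivAt (fun s : ℝ => -Real.log (sigmoid s)) (sigmoid t - 1) t := by
  have hpos : ∀ s : ℝ, 0 < 1 + Real.exp (-s) := fun s => by positivity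
  have hfun : (fun s : ℝ => -Real.log (sigmoid s)) =
      fun s => Real.log (1 + Real.exp (-s)) := by
    funext s
    simp [sigmoid, Real.log_inv]
  rw [hfun]
  have h := (((hasDerivAt_neg t).exp).const_add 1).log (hpos t).ne'
  refine h.congr_deriv ?_
  have hne := (hpos t).ne'
  unfold sigmoid
  field_simp
  ring

/-- Self-adaptive SimPO is balanced: with the stop-gradient
coefficient `β_w = β·(n_w·P_w)/(n_l·P_l)` treated as a constant, the SimPO
loss has `|d_w| = |d_l|`. -/
theorem adaptive_simpo_balanced (β γ nw nl Pw Pl βw : ℝ) (hβ : 0 < β)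
    (hnw : 0 < nw) (hnl : 0 < nl) (hPw : 0 < Pw) (hPl : 0 < Pl)
    (hβw : βw = β * (nw * Pw) / (nl * Pl)) :
    |deriv (fun P : ℝ =>
        -Real.log (sigmoid ((βw / nw) * Real.log P - (β / nl) * Real.log Pl - γ))) Pw| =
    |deriv (fun P : ℝ =>
        -Real.log (sigmoid ((βw / nw) * Real.log Pw - (β / nl) * Real.log P - γ))) Pl| := by
  have hw := (hasDerivAt_neg_log_sigmoid _).comp Pw
    ((((Real.hasDerivAt_log hPw.ne').const_mul (βw / nw)).sub_const
      ((β / nl) * Real.log Pl)).sub_const γ)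
  have hl := (hasDerivAt_neg_log_sigmoid _).comp Pl
    ((((Real.hasDerivAt_log hPl.ne').const_mul (β / nl)).const_sub
      ((βw / nw) * Real.log Pw)).sub_const γ)
  have hbal : βw / nw * Pw⁻¹ = β / nl * Pl⁻¹ := by
    rw [hβw]
    field_simp
  refine (congrArg abs hw.deriv).trans (Eq.trans ?_ (congrArg abs hl.deriv).symm)
  rw [hbal, mul_neg, abs_neg]
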